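/- arXiv:1608.06956 — 2 statements merged into one kernel-verified Lean document; each statement's English description precedes it below -/
import Mathlib

section
/- Let g: N → P be a degree-preserving morphism of Z-graded k[t]-modules with t^{2ε}·P = 0. Then N and ker g are 2ε-interleaved; explicitly, φ: N → ker g given by φ(n) = t^{2ε}·n and the inclusion ψ: ker g → N satisfy φψ = multiplication by t^{2ε} and ψφ = multiplication by t^{2ε}. -/
/-- A `ℤ`-graded `k[t]`-module, i.e. a persistence module over `ℤ`. -/
structure PersMod (k : Type*) [Field k] where
  V : ℤ → Type*
  [grp : ∀ j, AddCommGroup (V j)]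
  [mod : ∀ j, Module k (V j)]
  map : ∀ {i j : ℤ}, i ≤ j → (V i →ₗ[k] V j)
  map_id : ∀ i : ℤ, map (le_refl i) = LinearMap.id
  map_comp : ∀ {i j l : ℤ} (hij : i ≤ j) (hjl : j ≤ l),
    (map hjl).comp (map hij) = map (hij.trans hjl)

attribute [instance] PersMod.grp PersMod.mod

variable {k : Type*} [Field k]

/-- An `ε`-morphism of persistence modules (raises degree by `ε`). -/
structure EHom (M N : PersMod k) (ε : ℕ) where
  f : ∀ j : ℤ, M.V j →ₗ[k] N.V (j + ε)
  natural : ∀ {i j : ℤ} (h : i ≤ j),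
    (f j).comp (M.map h) = (N.map (by omega : (i : ℤ) + (ε : ℤ) ≤ j + (ε : ℤ))).comp (f i)

/-- An `ε`-interleaving: a pair of `ε`-morphisms whose composites in both
orders are multiplication by `t^{2ε}` (the structure maps shifting by `2ε`). -/
structure Interleaving (M N : PersMod k) (ε : ℕ) where
  φ : EHom M N ε
  ψ : EHom N M ε
  comp_φψ : ∀ j : ℤ, (ψ.f (j + ε)).comp (φ.f j)
      = M.map (by omega : (j : ℤ) ≤ j + (ε : ℤ) + (ε : ℤ))
  comp_ψφ : ∀ j : ℤ, (φ.f (j + ε)).comp (ψ.f j)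
      = N.map (by omega : (j : ℤ) ≤ j + (ε : ℤ) + (ε : ℤ))

/-- `t^{2ε} · M = 0`. -/
def IsTrivial (M : PersMod k) (ε : ℕ) : Prop :=
  ∀ j : ℤ, (M.map (by omega : (j : ℤ) ≤ j + 2 * (ε : ℤ))) = 0

/-- A degree-preserving morphism of persistence modules. -/
structure Hom0 (M N : PersMod k) where
  f : ∀ j : ℤ, M.V j →ₗ[k] N.V j
  natural : ∀ {i j : ℤ} (h : i ≤ j), (f j).comp (M.map h) = (N.map h).comp (f i)

/-- `0 → M → N → P → 0` is a short exact sequence of degree-preserving morphisms. -/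
def IsShortExact {M N P : PersMod k} (f : Hom0 M N) (g : Hom0 N P) : Prop :=
  (∀ j : ℤ, Function.Injective (f.f j)) ∧ (∀ j : ℤ, Function.Surjective (g.f j)) ∧
    ∀ j : ℤ, LinearMap.range (f.f j) = LinearMap.ker (g.f j)

/-- The zero persistence module. -/
def zeroPM : PersMod k where
  V _ := PUnit
  map _ := 0
  map_id _ := LinearMap.ext fun _ => rfl
  map_comp _ _ := LinearMap.ext fun _ => rfl

/-- The kernel of a degree-preserving morphism, as a persistence module. -/
def kerPM {N P : PersMod k} (g : Hom0 N P) : PersMod k where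
  V j := LinearMap.ker (g.f j)
  map {i j} h := (N.map h).restrict (p := LinearMap.ker (g.f i)) (q := LinearMap.ker (g.f j))
    (fun x hx => by
      have h1 := LinearMap.congr_fun (g.natural h) x
      simp only [LinearMap.coe_comp, Function.comp_apply] at h1
      simp only [LinearMap.mem_ker] at hx ⊢
      rw [h1, hx, map_zero])
  map_id i := by
    apply LinearMap.ext
    intro x
    apply Subtype.ext
    show (N.map (le_refl i)) (x : N.V i) = (x : N.V i)
    rw [N.map_id]
    rfl
  map_comp {i j l} hij hjl := by
    apply LinearMap.ext
    intro x
    apply Subtype.ext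
    show (N.map hjl) ((N.map hij) (x : N.V i)) = (N.map (hij.trans hjl)) (x : N.V i)
    exact LinearMap.congr_fun (N.map_comp hij hjl) (x : N.V i)

theorem PersMod.map_map (M : PersMod k) {i j l : ℤ} (hij : i ≤ j) (hjl : j ≤ l) (x : M.V i) :
    M.map hjl (M.map hij x) = M.map (hij.trans hjl) x :=
  LinearMap.congr_fun (M.map_comp hij hjl) x

theorem IsTrivial.map_eq_zero {M : PersMod k} {ε : ℕ} (hM : IsTrivial M ε) {i j : ℤ}
    (h : i + 2 * (ε : ℤ) ≤ j) : M.map (by omega : i ≤ j) = 0 := by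
  rw [← M.map_comp (by omega) h, hM i, LinearMap.comp_zero]

theorem Hom0.map_mem_ker {N P : PersMod k} (g : Hom0 N P) {ε : ℕ} (hP : IsTrivial P ε) {i j : ℤ}
    (h : i + 2 * (ε : ℤ) ≤ j) (x : N.V i) :
    N.map (by omega : i ≤ j) x ∈ LinearMap.ker (g.f j) := by
  have hx := LinearMap.congr_fun (g.natural (by omega : i ≤ j)) x
  rw [hP.map_eq_zero h] at hx
  exact hx

/-- Multiplication by `t^{2ε}`, as a `2ε`-morphism from `N` to the kernel of `g : N → P`,
where `t^{2ε}·P = 0`. -/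
def shiftToKer {N P : PersMod k} {ε : ℕ} (g : Hom0 N P) (hP : IsTrivial P ε) :
    EHom N (kerPM g) (2 * ε) where
  f j := (N.map (by omega : j ≤ j + ((2 * ε : ℕ) : ℤ))).codRestrict (LinearMap.ker (g.f _))
    (g.map_mem_ker hP (by omega))
  natural {i j} h := LinearMap.ext fun x => Subtype.ext <|
    (N.map_map h _ x).trans (N.map_map _ _ x).symm

/-- The inclusion of the kernel of `g : N → P` into `N`, followed by multiplication by `t^ε`. -/
def kerShift {N P : PersMod k} (g : Hom0 N P) (ε : ℕ) : EHom (kerPM g) N ε where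
  f j := (N.map (by omega : j ≤ j + (ε : ℤ))).comp (LinearMap.ker (g.f j)).subtype
  natural {i j} h := LinearMap.ext fun x =>
    (N.map_map h _ x.1).trans (N.map_map _ _ x.1).symm

/-- If the codomain of `g : N → P` satisfies `t^{2ε}·P = 0`, then `N` and
`ker g` are `2ε`-interleaved. -/
theorem ker_interleaved {N P : PersMod k} (ε : ℕ) (g : Hom0 N P) (hP : IsTrivial P ε) :
    Nonempty (Interleaving N (kerPM g) (2 * ε)) :=
  ⟨{ φ := shiftToKer g hP
     ψ := kerShift g (2 * ε)
     comp_φψ := fun _ => LinearMap.ext fun x => N.map_map _ _ x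
     comp_ψφ := fun _ => LinearMap.ext fun x => Subtype.ext (N.map_map _ _ x.1) }⟩
end

section
/- Right interleavings satisfy a triangle inequality: if M is 2ε₁-right interleaved with N and N is 2ε₂-right interleaved with P, then M is 2(ε₁+ε₂)-right interleaved with P. -/
universe u v

variable {k : Type*} [Field k]

/-- `N` is `2ε`-right interleaved with `P`: there is a short exact sequence
`0 → K → N → P → 0` with `t^{2ε}·K = 0`. -/
def RightInterleaved {k : Type u} [Field k] (N P : PersMod.{u, v} k) (ε : ℕ) : Prop :=
  ∃ (K : PersMod.{u, v} k) (f : Hom0 K N) (g : Hom0 N P), IsShortExact f g ∧ IsTrivial K ε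

namespace PersMod

theorem map_map_apply (M : PersMod k) {i j l : ℤ} (hij : i ≤ j) (hjl : j ≤ l) (x : M.V i) :
    M.map hjl (M.map hij x) = M.map (hij.trans hjl) x :=
  LinearMap.congr_fun (M.map_comp hij hjl) x

end PersMod

namespace Hom0

theorem map_apply {M N : PersMod k} (g : Hom0 M N) {i j : ℤ} (h : i ≤ j) (x : M.V i) :
    g.f j (M.map h x) = N.map h (g.f i x) :=
  LinearMap.congr_fun (g.natural h) x

/-- Composition of degree-preserving morphisms. -/
def comp {M N P : PersMod k} (g : Hom0 N P) (f : Hom0 M N) : Hom0 M P where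
  f j := (g.f j).comp (f.f j)
  natural h := LinearMap.ext fun x => by simp [map_apply]

/-- The kernel of a degree-preserving morphism, computed degreewise. -/
def ker {M N : PersMod k} (g : Hom0 M N) : PersMod k where
  V j := LinearMap.ker (g.f j)
  map {i j} h := (M.map h).restrict (p := LinearMap.ker (g.f i)) (q := LinearMap.ker (g.f j))
    fun x hx => by
      rw [LinearMap.mem_ker] at hx ⊢
      rw [map_apply, hx, map_zero]
  map_id i := LinearMap.ext fun x => Subtype.ext (LinearMap.congr_fun (M.map_id i) x)
  map_comp hij hjl := LinearMap.ext fun x => Subtype.ext (M.map_map_apply hij hjl x)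

/-- The inclusion of the kernel of a degree-preserving morphism. -/
def kerInclusion {M N : PersMod k} (g : Hom0 M N) : Hom0 g.ker M where
  f j := (LinearMap.ker (g.f j)).subtype
  natural _ := rfl

theorem isShortExact_kerInclusion {M N : PersMod k} (g : Hom0 M N)
    (hg : ∀ j, Function.Surjective (g.f j)) : IsShortExact g.kerInclusion g :=
  ⟨fun _ => Subtype.val_injective, hg, fun j => (LinearMap.ker (g.f j)).range_subtype⟩

end Hom0

/-- A right interleaving is a surjective morphism whose kernel is annihilated by `t^{2ε}`. -/
theorem rightInterleaved_iff {k : Type u} [Field k] {N P : PersMod.{u, v} k} {ε : ℕ} :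
    RightInterleaved N P ε ↔ ∃ g : Hom0 N P, (∀ j, Function.Surjective (g.f j)) ∧
      ∀ (j : ℤ) (x : N.V j), g.f j x = 0 →
        N.map (by omega : (j : ℤ) ≤ j + 2 * (ε : ℤ)) x = 0 := by
  constructor
  · rintro ⟨K, f, g, ⟨-, hg, hfg⟩, hK⟩
    refine ⟨g, hg, fun j x hx => ?_⟩
    obtain ⟨y, rfl⟩ : x ∈ LinearMap.range (f.f j) := by rwa [hfg, LinearMap.mem_ker]
    rw [← f.map_apply, hK j, LinearMap.zero_apply, map_zero]
  · rintro ⟨g, hg, hker⟩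
    exact ⟨g.ker, g.kerInclusion, g, g.isShortExact_kerInclusion hg,
      fun j => LinearMap.ext fun x => Subtype.ext (hker j x.1 x.2)⟩

/-- Triangle inequality for right interleavings. -/
theorem right_interleaved_triangle (M N P : PersMod k) (ε₁ ε₂ : ℕ)
    (h1 : RightInterleaved M N ε₁) (h2 : RightInterleaved N P ε₂) :
    RightInterleaved M P (ε₁ + ε₂) := by
  rw [rightInterleaved_iff] at h1 h2 ⊢
  obtain ⟨g₁, hg₁, hker₁⟩ := h1
  obtain ⟨g₂, hg₂, hker₂⟩ := h2
  refine ⟨g₂.comp g₁, fun j => (hg₂ j).comp (hg₁ j), fun j x hx => ?_⟩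
  have hx₁ := hker₁ _ (M.map (by omega : j ≤ j + 2 * (ε₂ : ℤ)) x)
    (by rw [g₁.map_apply]; exact hker₂ j _ hx)
  rw [M.map_map_apply] at hx₁
  have hle : j + 2 * (ε₂ : ℤ) + 2 * (ε₁ : ℤ) ≤ j + 2 * ((ε₁ + ε₂ : ℕ) : ℤ) := by
    push_cast
    omega
  rw [← M.map_map_apply (by omega) hle, hx₁, map_zero]
end
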